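/- arXiv:1902.08393 — 2 statements merged into one kernel-verified Lean document; each statement's English description precedes it below -/
import Mathlib

section
/- For Beurling weights ϑ₁, ϑ₂ on ℝ^d and 1 ≤ p, q, r < ∞, the space A^{p,1,q,r}_{ϑ₁,ϑ₂}(ℝ^d) is complete with respect to the norm ‖f‖_A = ‖f‖_{p1,ϑ₁} + ‖f̂‖_{qr,ϑ₂}, i.e. it is a Banach space. -/
open MeasureTheory Filter Topology
open scoped ENNReal NNReal BigOperators

noncomputable section

/-- The unit cube `α + [0,1)^d` at the integer point `α ∈ ℤ^d`. -/
def cube {d : ℕ} (α : Fin d → ℤ) : Set (Fin d → ℝ) :=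
  Set.univ.pi fun i => Set.Ico (α i : ℝ) ((α i : ℝ) + 1)

/-- The weighted amalgam norm `‖f‖_{pq,ω}` of the space `(L^p_ω, ℓ^q)`. -/
def amalgamNorm {d : ℕ} (p q : ℝ) (ω : (Fin d → ℝ) → ℝ) (f : (Fin d → ℝ) → ℂ) : ℝ≥0∞ :=
  (∑' α : Fin d → ℤ,
      (eLpNorm (fun x => ω x • f x) (ENNReal.ofReal p) (volume.restrict (cube α))) ^ q) ^ (1 / q)

/-- Membership in the weighted amalgam space `(L^p_ω, ℓ^q)`. -/
def MemAmalgam {d : ℕ} (p q : ℝ) (ω : (Fin d → ℝ) → ℝ) (f : (Fin d → ℝ) → ℂ) : Prop :=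
  Measurable f ∧ amalgamNorm p q ω f < ⊤

/-- A Beurling weight: measurable, `ϑ ≥ 1` and submultiplicative. -/
def IsBeurling {d : ℕ} (ϑ : (Fin d → ℝ) → ℝ) : Prop :=
  Measurable ϑ ∧ (∀ x, 1 ≤ ϑ x) ∧ ∀ x y, ϑ (x + y) ≤ ϑ x * ϑ y

/-- The Fourier transform `f̂(ξ) = ∫ f(x) e^{-2πi⟨x,ξ⟩} dx`. -/
def fourierT {d : ℕ} (f : (Fin d → ℝ) → ℂ) (ξ : Fin d → ℝ) : ℂ :=
  ∫ x : Fin d → ℝ,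
    Complex.exp (-(2 * (Real.pi : ℂ) * Complex.I * ∑ i, (x i : ℂ) * (ξ i : ℂ))) * f x

/-- The norm of `A^{p,1,q,r}_{ϑ₁,ϑ₂}(ℝ^d)`. -/
def ANorm {d : ℕ} (p q r : ℝ) (ϑ₁ ϑ₂ : (Fin d → ℝ) → ℝ) (f : (Fin d → ℝ) → ℂ) : ℝ≥0∞ :=
  amalgamNorm p 1 ϑ₁ f + amalgamNorm q r ϑ₂ (fourierT f)

/-- Membership in `A^{p,1,q,r}_{ϑ₁,ϑ₂}(ℝ^d)`. -/
def MemA {d : ℕ} (p q r : ℝ) (ϑ₁ ϑ₂ : (Fin d → ℝ) → ℝ) (f : (Fin d → ℝ) → ℂ) : Prop :=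
  MemAmalgam p 1 ϑ₁ f ∧ MemAmalgam q r ϑ₂ (fourierT f)

/-- Convolution `(f∗g)(x) = ∫ f(x−t)g(t) dt`. -/
def convF {d : ℕ} (f g : (Fin d → ℝ) → ℂ) (x : Fin d → ℝ) : ℂ :=
  ∫ t : Fin d → ℝ, f (x - t) * g t

/-- `ϑ ≺ ϑ'` : domination of weights up to a constant. -/
def Prec {d : ℕ} (ϑ ϑ' : (Fin d → ℝ) → ℝ) : Prop :=
  ∃ C : ℝ, 0 < C ∧ ∀ x, ϑ x ≤ C * ϑ' x

/-- The Beurling–Domar condition `∑_{n≥1} log ϑ(nx)/n² < ∞`. -/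
def BeurlingDomar {d : ℕ} (ϑ : (Fin d → ℝ) → ℝ) : Prop :=
  ∀ x : Fin d → ℝ, Summable fun n : ℕ => Real.log (ϑ ((n : ℝ) • x)) / (n : ℝ) ^ 2

/-- `w` does not tend to zero as `|x| → ∞`. -/
def NotVanishingAtInfty {d : ℕ} (w : (Fin d → ℝ) → ℝ) : Prop :=
  ∃ δ : ℝ, 0 < δ ∧ ∀ R : ℝ, 0 < R → ∃ x : Fin d → ℝ, R < ‖x‖ ∧ δ ≤ w x

end

theorem cube_measurableSet {d : ℕ} (α : Fin d → ℤ) : MeasurableSet (cube α) :=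
  MeasurableSet.univ_pi fun _ => measurableSet_Ico

theorem mem_cube_iff {d : ℕ} (α : Fin d → ℤ) (x : Fin d → ℝ) :
    x ∈ cube α ↔ (fun i => ⌊x i⌋) = α := by
  simp only [cube, Set.mem_univ_pi, Set.mem_Ico, funext_iff, Int.floor_eq_iff]

theorem cube_iUnion {d : ℕ} : (⋃ α : Fin d → ℤ, cube α) = Set.univ := by
  ext x
  simp [mem_cube_iff]

theorem cube_disjoint {d : ℕ} : Pairwise (Function.onFun Disjoint (cube (d := d))) := by
  intro α β h
  rw [Function.onFun, Set.disjoint_left]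
  intro x hx hy
  rw [mem_cube_iff] at hx hy
  exact h (hx.symm.trans hy)

theorem cube_volume {d : ℕ} (α : Fin d → ℤ) : volume (cube α) = 1 := by
  simp [cube, Real.volume_Ico, volume_pi_pi]

/-- The amalgam norm with `q = 1` and weight at least one dominates the `L¹` norm. -/
theorem eLpNorm_one_le {d : ℕ} {p : ℝ} (hp : 1 ≤ p) {ω : (Fin d → ℝ) → ℝ}
    (hω : ∀ x, 1 ≤ ω x) {f : (Fin d → ℝ) → ℂ} (hf : Measurable f) :
    eLpNorm f 1 volume ≤ amalgamNorm p 1 ω f := by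
  have e : eLpNorm f 1 volume
      = ∑' α : Fin d → ℤ, eLpNorm f 1 (volume.restrict (cube α)) := by
    simp only [eLpNorm_one_eq_lintegral_enorm]
    rw [← lintegral_iUnion cube_measurableSet cube_disjoint, cube_iUnion, Measure.restrict_univ]
  rw [e]
  simp only [amalgamNorm, ENNReal.rpow_one, div_one]
  refine ENNReal.tsum_le_tsum fun α => ?_
  haveI : IsProbabilityMeasure (volume.restrict (cube α)) :=
    ⟨by rw [Measure.restrict_apply_univ, cube_volume]⟩
  refine (eLpNorm_le_eLpNorm_of_exponent_le (q := ENNReal.ofReal p) ?_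
    hf.aestronglyMeasurable).trans ?_
  · rw [← ENNReal.ofReal_one]; exact ENNReal.ofReal_le_ofReal hp
  · refine eLpNorm_mono fun x => ?_
    rw [norm_smul, Real.norm_eq_abs, abs_of_nonneg (zero_le_one.trans (hω x))]
    exact le_mul_of_one_le_left (norm_nonneg _) (hω x)

/-- Fatou property of the amalgam norm. -/
theorem amalgam_fatou {d : ℕ} {p q : ℝ} (hq : 1 ≤ q) {ω : (Fin d → ℝ) → ℝ}
    (hω : Measurable ω) {u : ℕ → (Fin d → ℝ) → ℂ} (hu : ∀ n, Measurable (u n))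
    {v : (Fin d → ℝ) → ℂ} (hlim : ∀ᵐ x, Tendsto (fun n => u n x) atTop (𝓝 (v x)))
    {C : ℝ≥0∞} (hC : ∀ᶠ n in atTop, amalgamNorm p q ω (u n) ≤ C) :
    amalgamNorm p q ω v ≤ C := by
  have hq0 : 0 < q := zero_lt_one.trans_le hq
  have key : ∀ (w : (Fin d → ℝ) → ℂ), amalgamNorm p q ω w ≤ C ↔
      ∑' α : Fin d → ℤ, (eLpNorm (fun x => ω x • w x) (ENNReal.ofReal p)
        (volume.restrict (cube α))) ^ q ≤ C ^ q := by
    intro w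
    rw [amalgamNorm, one_div, ENNReal.rpow_inv_le_iff hq0]
  rw [key]
  simp only [key] at hC
  set a : ℕ → (Fin d → ℤ) → ℝ≥0∞ := fun n α => eLpNorm (fun x => ω x • u n x)
    (ENNReal.ofReal p) (volume.restrict (cube α)) with ha
  have step : ∀ α : Fin d → ℤ, (eLpNorm (fun x => ω x • v x) (ENNReal.ofReal p)
        (volume.restrict (cube α))) ^ q ≤ liminf (fun n => a n α ^ q) atTop := by
    intro α
    have h := Lp.eLpNorm_lim_le_liminf_eLpNorm (p := ENNReal.ofReal p)
      (μ := volume.restrict (cube α)) (f := fun n x => ω x • u n x)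
      (fun n => (hω.smul (hu n)).aestronglyMeasurable) (fun x => ω x • v x)
      ((ae_restrict_of_ae hlim).mono fun x hx => hx.const_smul (ω x))
    have h' := ENNReal.rpow_le_rpow h hq0.le
    refine h'.trans (le_of_eq ?_)
    exact OrderIso.liminf_apply (ENNReal.orderIsoRpow q hq0) (by isBoundedDefault)
      (by isBoundedDefault) (by isBoundedDefault) (by isBoundedDefault)
  calc _ ≤ ∑' α, liminf (fun n => a n α ^ q) atTop := ENNReal.tsum_le_tsum step
    _ = ∫⁻ α, liminf (fun n => a n α ^ q) atTop ∂Measure.count := (lintegral_count _).symm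
    _ ≤ liminf (fun n => ∫⁻ α, a n α ^ q ∂Measure.count) atTop :=
        lintegral_liminf_le fun n => measurable_of_countable _
    _ = liminf (fun n => ∑' α, a n α ^ q) atTop := by simp only [lintegral_count]
    _ ≤ C ^ q := liminf_le_of_frequently_le' hC.frequently

/-- The amalgam space is closed under differences. -/
theorem amalgam_sub {d : ℕ} {p q : ℝ} (hp : 1 ≤ p) (hq : 1 ≤ q) {ω : (Fin d → ℝ) → ℝ}
    (hω : Measurable ω) {u v : (Fin d → ℝ) → ℂ} (hu : MemAmalgam p q ω u)
    (hv : MemAmalgam p q ω v) : MemAmalgam p q ω (fun x => u x - v x) := by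
  have hq0 : 0 < q := zero_lt_one.trans_le hq
  refine ⟨hu.1.sub hv.1, ?_⟩
  have key : ∀ (w : (Fin d → ℝ) → ℂ), amalgamNorm p q ω w < ⊤ ↔
      ∑' α : Fin d → ℤ, (eLpNorm (fun x => ω x • w x) (ENNReal.ofReal p)
        (volume.restrict (cube α))) ^ q < ⊤ := by
    intro w
    rw [amalgamNorm, ENNReal.rpow_lt_top_iff_of_pos (by positivity)]
  have h1 := (key u).1 hu.2
  have h2 := (key v).1 hv.2
  rw [key]
  refine lt_of_le_of_lt (b := (2 : ℝ≥0∞) ^ (q - 1) *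
    (∑' α : Fin d → ℤ, (eLpNorm (fun x => ω x • u x) (ENNReal.ofReal p)
        (volume.restrict (cube α))) ^ q + ∑' α : Fin d → ℤ, (eLpNorm (fun x => ω x • v x)
        (ENNReal.ofReal p) (volume.restrict (cube α))) ^ q)) ?_ ?_
  · rw [← ENNReal.tsum_add, ← ENNReal.tsum_mul_left]
    refine ENNReal.tsum_le_tsum fun α => ?_
    refine le_trans ?_ (ENNReal.rpow_add_le_mul_rpow_add_rpow _ _ hq)
    refine ENNReal.rpow_le_rpow ?_ hq0.le
    have := eLpNorm_sub_le (p := ENNReal.ofReal p) (μ := volume.restrict (cube α))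
      (hω.smul hu.1).aestronglyMeasurable (hω.smul hv.1).aestronglyMeasurable
      (by rw [← ENNReal.ofReal_one]; exact ENNReal.ofReal_le_ofReal hp)
    refine le_trans (le_of_eq ?_) this
    congr 1
    ext x
    simp [mul_sub]
  · exact ENNReal.mul_lt_top (ENNReal.rpow_lt_top_of_nonneg (by linarith) (by simp))
      (ENNReal.add_lt_top.2 ⟨h1, h2⟩)

/-- The character in the Fourier transform has modulus one. -/
theorem norm_char {d : ℕ} (x ξ : Fin d → ℝ) :
    ‖Complex.exp (-(2 * (Real.pi : ℂ) * Complex.I * ∑ i, (x i : ℂ) * (ξ i : ℂ)))‖ = 1 := by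
  have : (-(2 * (Real.pi : ℂ) * Complex.I * ∑ i, (x i : ℂ) * (ξ i : ℂ)))
      = ((-(2 * Real.pi * ∑ i, x i * ξ i) : ℝ) : ℂ) * Complex.I := by
    push_cast; ring
  rw [this, Complex.norm_exp_ofReal_mul_I]

theorem char_measurable {d : ℕ} (ξ : Fin d → ℝ) : Measurable fun x : Fin d → ℝ =>
    Complex.exp (-(2 * (Real.pi : ℂ) * Complex.I * ∑ i, (x i : ℂ) * (ξ i : ℂ))) := by
  have : Continuous fun x : Fin d → ℝ =>
    Complex.exp (-(2 * (Real.pi : ℂ) * Complex.I * ∑ i, (x i : ℂ) * (ξ i : ℂ))) := by fun_prop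
  exact this.measurable

theorem char_integrable {d : ℕ} {f : (Fin d → ℝ) → ℂ} (hf : Integrable f) (ξ : Fin d → ℝ) :
    Integrable fun x : Fin d → ℝ =>
    Complex.exp (-(2 * (Real.pi : ℂ) * Complex.I * ∑ i, (x i : ℂ) * (ξ i : ℂ))) * f x :=
  hf.bdd_mul (c := 1) (char_measurable ξ).aestronglyMeasurable
    (Eventually.of_forall fun x => (norm_char x ξ).le)

theorem fourierT_sub {d : ℕ} {f g : (Fin d → ℝ) → ℂ} (hf : Integrable f) (hg : Integrable g) :
    fourierT (fun x => f x - g x) = fun ξ => fourierT f ξ - fourierT g ξ := by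
  ext ξ
  simp only [fourierT]
  rw [← integral_sub (char_integrable hf ξ) (char_integrable hg ξ)]
  simp only [mul_sub]

theorem fourierT_tendsto {d : ℕ} {f : ℕ → (Fin d → ℝ) → ℂ} {g : (Fin d → ℝ) → ℂ}
    (hf : ∀ n, Integrable (f n)) (hg : Integrable g)
    (h : Tendsto (fun n => eLpNorm (f n - g) 1 volume) atTop (𝓝 0)) (ξ : Fin d → ℝ) :
    Tendsto (fun n => fourierT (f n) ξ) atTop (𝓝 (fourierT g ξ)) := by
  refine tendsto_integral_of_L1 _ (char_integrable hg ξ).aestronglyMeasurable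
    (Eventually.of_forall fun n => char_integrable (hf n) ξ) ?_
  refine h.congr fun n => ?_
  rw [eLpNorm_one_eq_lintegral_enorm]
  refine lintegral_congr fun x => ?_
  rw [← mul_sub, enorm_mul, ← ofReal_norm_eq_enorm (Complex.exp _), norm_char]
  simp

/-- `A^{p,1,q,r}_{ϑ₁,ϑ₂}(ℝ^d)` is complete, i.e. a Banach space. -/
theorem A_complete {d : ℕ} (p q r : ℝ) (hp : 1 ≤ p) (hq : 1 ≤ q) (hr : 1 ≤ r)
    (ϑ₁ ϑ₂ : (Fin d → ℝ) → ℝ) (h1 : IsBeurling ϑ₁) (h2 : IsBeurling ϑ₂)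
    (f : ℕ → (Fin d → ℝ) → ℂ) (hf : ∀ n, MemA p q r ϑ₁ ϑ₂ (f n))
    (hcau : ∀ ε : ℝ, 0 < ε → ∃ N : ℕ, ∀ m n : ℕ, N ≤ m → N ≤ n →
      ANorm p q r ϑ₁ ϑ₂ (fun x => f m x - f n x) < ENNReal.ofReal ε) :
    ∃ g : (Fin d → ℝ) → ℂ, MemA p q r ϑ₁ ϑ₂ g ∧
      Tendsto (fun n => ANorm p q r ϑ₁ ϑ₂ (fun x => f n x - g x)) atTop (nhds 0) := by
  have hm : ∀ n, Measurable (f n) := fun n => (hf n).1.1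
  have hL : ∀ n, MemLp (f n) 1 volume := fun n =>
    ⟨(hm n).aestronglyMeasurable, (eLpNorm_one_le hp h1.2.1 (hm n)).trans_lt (hf n).1.2⟩
  have hI : ∀ n, Integrable (f n) := fun n => memLp_one_iff_integrable.1 (hL n)
  have hcs : CauchySeq fun n => (hL n).toLp (f n) := by
    rw [EMetric.cauchySeq_iff]
    intro ε hε
    obtain ⟨δ, hδ0, hδ⟩ := ENNReal.lt_iff_exists_real_btwn.1 hε
    obtain ⟨N, hN⟩ := hcau δ (ENNReal.ofReal_pos.1 hδ.1)
    refine ⟨N, fun m hm' n hn' => ?_⟩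
    rw [Lp.edist_toLp_toLp]
    calc _ ≤ amalgamNorm p 1 ϑ₁ (fun x => f m x - f n x) :=
          eLpNorm_one_le hp h1.2.1 ((hm m).sub (hm n))
      _ ≤ ANorm p q r ϑ₁ ϑ₂ (fun x => f m x - f n x) := le_self_add
      _ < _ := (hN m n hm' hn').trans hδ.2
  obtain ⟨G, hG⟩ := cauchySeq_tendsto_of_complete hcs
  obtain ⟨g, hgm, hGg⟩ := Lp.aestronglyMeasurable G
  have hgL : MemLp g 1 volume := (memLp_congr_ae hGg).1 (Lp.memLp G)
  have hGeq : hgL.toLp g = G := by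
    rw [← Lp.toLp_coeFn G (Lp.memLp G)]
    exact (MemLp.toLp_eq_toLp_iff _ _).2 hGg.symm
  have hgI : Integrable g := memLp_one_iff_integrable.1 hgL
  have hgM : Measurable g := hgm.measurable
  rw [← hGeq, Lp.tendsto_Lp_iff_tendsto_eLpNorm''] at hG
  obtain ⟨ns, hns, hae⟩ := (tendstoInMeasure_of_tendsto_eLpNorm one_ne_zero
    (fun n => (hL n).1) hgL.1 hG).exists_seq_tendsto_ae
  have hF := fourierT_tendsto hI hgI hG
  have hFM : Measurable (fourierT g) :=
    measurable_of_tendsto_metrizable (fun n => (hf n).2.1) (tendsto_pi_nhds.2 hF)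
  have hbd : ∀ ε : ℝ, 0 < ε → ∃ N : ℕ, ∀ n, N ≤ n →
      amalgamNorm p 1 ϑ₁ (fun x => f n x - g x) ≤ ENNReal.ofReal ε ∧
      amalgamNorm q r ϑ₂ (fourierT (fun x => f n x - g x)) ≤ ENNReal.ofReal ε := by
    intro ε hε
    obtain ⟨N, hN⟩ := hcau ε hε
    refine ⟨N, fun n hn => ⟨?_, ?_⟩⟩
    · refine amalgam_fatou le_rfl h1.1 (u := fun k x => f n x - f (ns k) x)
        (fun k => (hm n).sub (hm _)) (hae.mono fun x hx => hx.const_sub _) ?_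
      filter_upwards [hns.tendsto_atTop.eventually_ge_atTop N] with k hk
      exact le_self_add.trans (hN n (ns k) hn hk).le
    · rw [fourierT_sub (hI n) hgI]
      refine amalgam_fatou hr h2.1 (u := fun k ξ => fourierT (f n) ξ - fourierT (f k) ξ)
        (fun k => (hf n).2.1.sub (hf k).2.1)
        (Eventually.of_forall fun ξ => (hF ξ).const_sub _) ?_
      filter_upwards [eventually_ge_atTop N] with k hk
      rw [← fourierT_sub (hI n) (hI k)]
      exact le_add_self.trans (hN n k hn hk).le
  refine ⟨g, ?_, ?_⟩
  · obtain ⟨N, hN⟩ := hbd 1 one_pos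
    obtain ⟨ha, hb⟩ := hN N le_rfl
    rw [fourierT_sub (hI N) hgI] at hb
    constructor
    · have := amalgam_sub hp le_rfl h1.1 (hf N).1
        ⟨(hm N).sub hgM, ha.trans_lt ENNReal.ofReal_lt_top⟩
      simpa using this
    · have := amalgam_sub hq hr h2.1 (hf N).2
        ⟨(hf N).2.1.sub hFM, hb.trans_lt ENNReal.ofReal_lt_top⟩
      simpa using this
  · rw [ENNReal.tendsto_nhds_zero]
    intro ε hε
    obtain ⟨δ, hδ0, hδ⟩ := ENNReal.lt_iff_exists_real_btwn.1 hε
    have hδp : 0 < δ := ENNReal.ofReal_pos.1 hδ.1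
    obtain ⟨N, hN⟩ := hbd (δ / 2) (half_pos hδp)
    filter_upwards [eventually_ge_atTop N] with n hn
    obtain ⟨ha, hb⟩ := hN n hn
    refine (add_le_add ha hb).trans ?_
    rw [← ENNReal.ofReal_add (half_pos hδp).le (half_pos hδp).le, add_halves]
    exact hδ.2.le
end

section
/- Let ϑ₁, ϑ₂ be Beurling weights on ℝ^d with ϑ₁ satisfying the Beurling–Domar condition, and let 1 ≤ q, r < ∞. Then A^{1,1,q,r}_{ϑ₁,ϑ₂}(ℝ^d) is a dense subspace of the Beurling algebra L¹_{ϑ₁}(ℝ^d) with respect to the norm ‖·‖_{1,ϑ₁}, and moreover ‖f‖_{1,ϑ₁} ≤ ‖f‖_A for every f ∈ A^{1,1,q,r}_{ϑ₁,ϑ₂}(ℝ^d). -/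
open MeasureTheory Filter Topology
open scoped ENNReal NNReal BigOperators

namespace ADense

theorem gauss_int {d : ℕ} {b : ℝ} (hb : 0 < b) :
    Integrable (fun t : Fin d → ℝ => Real.exp (-b * ∑ i, t i ^ 2)) := by
  have h := Integrable.fintype_prod (ι := Fin d) (𝕜 := ℝ) (μ := fun _ => (volume : Measure ℝ))
    (f := fun _ x => Real.exp (-b * x ^ 2)) (fun _ => integrable_exp_neg_mul_sq hb)
  have e : (fun t : Fin d → ℝ => Real.exp (-b * ∑ i, t i ^ 2)) =
      fun t => ∏ i, Real.exp (-b * t i ^ 2) := by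
    ext x
    rw [← Real.exp_sum, Finset.mul_sum]
  rw [e]
  exact h

theorem norm_sq_le {d : ℕ} (x : Fin d → ℝ) : ‖x‖ ^ 2 ≤ ∑ i, x i ^ 2 := by
  have h0 : 0 ≤ ∑ i, x i ^ 2 := Finset.sum_nonneg fun i _ => sq_nonneg _
  have : ‖x‖ ≤ Real.sqrt (∑ i, x i ^ 2) := by
    rw [pi_norm_le_iff_of_nonneg (Real.sqrt_nonneg _)]
    intro i
    apply Real.le_sqrt_of_sq_le
    rw [Real.norm_eq_abs, sq_abs]
    exact Finset.single_le_sum (f := fun i => x i ^ 2) (fun i _ => sq_nonneg _) (Finset.mem_univ i)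
  calc ‖x‖ ^ 2 ≤ Real.sqrt (∑ i, x i ^ 2) ^ 2 := by gcongr
    _ = _ := Real.sq_sqrt h0

theorem exp_absorb {d : ℕ} {a c : ℝ} (hc : 0 < c) (x : Fin d → ℝ) :
    Real.exp (a * ‖x‖) * Real.exp (-c * ∑ i, x i ^ 2) ≤
      Real.exp (a ^ 2 / (2 * c)) * Real.exp (-(c / 2) * ∑ i, x i ^ 2) := by
  rw [← Real.exp_add, ← Real.exp_add]
  apply Real.exp_le_exp.mpr
  have h := norm_sq_le x
  have h2 : a * ‖x‖ ≤ a ^ 2 / (2 * c) + c / 2 * ‖x‖ ^ 2 := by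
    have : a ^ 2 / (2 * c) + c / 2 * ‖x‖ ^ 2 - a * ‖x‖ = (a - c * ‖x‖) ^ 2 / (2 * c) := by
      field_simp
      ring
    have h3 : 0 ≤ (a - c * ‖x‖) ^ 2 / (2 * c) := by positivity
    linarith
  nlinarith

theorem pow_bound {d : ℕ} {ϑ : (Fin d → ℝ) → ℝ} (h : IsBeurling ϑ) (y : Fin d → ℝ) (m : ℕ) :
    ϑ (((m : ℝ) + 1) • y) ≤ ϑ y ^ (m + 1) := by
  obtain ⟨_, h1, hs⟩ := h
  induction m with
  | zero => simp
  | succ k ih =>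
    have : (((k + 1 : ℕ) : ℝ) + 1) • y = ((k : ℝ) + 1) • y + y := by
      push_cast; rw [add_smul _ (1 : ℝ), one_smul]
    rw [this, pow_succ]
    refine (hs _ _).trans ?_
    have := h1 y
    gcongr

theorem beurling_bound {d : ℕ} {ϑ : (Fin d → ℝ) → ℝ} (h : IsBeurling ϑ) :
    ∃ C a : ℝ, 0 < C ∧ 0 ≤ a ∧ ∀ x, ϑ x ≤ C * Real.exp (a * ‖x‖) := by
  have hh := h
  obtain ⟨hm, h1, hs⟩ := h
  let B : ℕ → Set (Fin d → ℝ) := fun n => {x | ϑ x ≤ n ∧ ϑ (-x) ≤ n}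
  have hBm : ∀ n, MeasurableSet (B n) := fun n =>
    (measurableSet_le hm measurable_const).inter
      (measurableSet_le (hm.comp measurable_neg) measurable_const)
  have hU : (⋃ n, B n) = Set.univ := by
    ext x
    simp only [Set.mem_iUnion, Set.mem_univ, iff_true]
    obtain ⟨n, hn⟩ := exists_nat_ge (max (ϑ x) (ϑ (-x)))
    exact ⟨n, (le_max_left _ _).trans hn, (le_max_right _ _).trans hn⟩
  have : ∃ n, 0 < volume (B n) := by
    by_contra! hc
    have h0 : volume (⋃ n, B n) = 0 := measure_iUnion_null fun n => le_antisymm (hc n) bot_le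
    rw [hU] at h0
    exact (NeZero.ne (volume : Measure (Fin d → ℝ))) (Measure.measure_univ_eq_zero.mp h0)
  obtain ⟨n, hn⟩ := this
  have hst := Measure.sub_mem_nhds_zero_of_addHaar_pos volume (B n) (hBm n) hn
  obtain ⟨ε, hε, hb⟩ := Metric.mem_nhds_iff.mp hst
  have hK : ∀ x, ‖x‖ < ε → ϑ x ≤ (n : ℝ) * n := by
    intro x hx
    obtain ⟨u, hu, v, hv, rfl⟩ := hb (by simpa using hx : x ∈ Metric.ball 0 ε)
    simp only
    rw [sub_eq_add_neg]
    refine (hs _ _).trans ?_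
    have := h1 u; have := h1 (-v)
    exact mul_le_mul hu.1 hv.2 (by linarith) (by positivity)
  set K : ℝ := (n : ℝ) * n
  have hK1 : 1 ≤ K := (h1 0).trans (hK 0 (by simpa using hε))
  refine ⟨K, Real.log K / ε, by linarith, by have := Real.log_nonneg hK1; positivity, fun x => ?_⟩
  let m := ⌊‖x‖ / ε⌋₊
  have hm1 : ‖x‖ / ε < m + 1 := Nat.lt_floor_add_one _
  have hm2 : (m : ℝ) ≤ ‖x‖ / ε := Nat.floor_le (by positivity)
  have hpos : (0 : ℝ) < m + 1 := by positivity
  have hx : x = ((m : ℝ) + 1) • (((m : ℝ) + 1)⁻¹ • x) := by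
    rw [smul_smul, mul_inv_cancel₀ hpos.ne', one_smul]
  have hy : ‖((m : ℝ) + 1)⁻¹ • x‖ < ε := by
    rw [norm_smul, norm_inv, Real.norm_of_nonneg hpos.le, inv_mul_lt_iff₀ hpos]
    rw [div_lt_iff₀ hε] at hm1
    exact hm1
  calc ϑ x ≤ ϑ (((m : ℝ) + 1)⁻¹ • x) ^ (m + 1) := by
        conv_lhs => rw [hx]
        exact pow_bound hh _ _
    _ ≤ K ^ (m + 1) := by
        have := h1 (((m : ℝ) + 1)⁻¹ • x)
        gcongr
        exact hK _ hy
    _ = K * Real.exp (Real.log K * m) := by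
        rw [pow_succ, mul_comm, Real.exp_mul, Real.exp_log (by linarith), Real.rpow_natCast]
    _ ≤ K * Real.exp (Real.log K / ε * ‖x‖) := by
        have := Real.log_nonneg hK1
        have e : Real.log K / ε * ‖x‖ = Real.log K * (‖x‖ / ε) := by ring
        rw [e]
        gcongr

theorem cube_meas {d : ℕ} (α : Fin d → ℤ) : MeasurableSet (cube α) :=
  MeasurableSet.univ_pi fun _ => measurableSet_Ico

theorem cube_vol {d : ℕ} (α : Fin d → ℤ) : volume (cube α) = 1 := by
  simp [cube, volume_pi_pi]

theorem cube_disj {d : ℕ} : Pairwise (Function.onFun Disjoint (cube (d := d))) := by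
  intro α β hab
  rw [Function.onFun, Set.disjoint_left]
  intro x hx hy
  apply hab
  ext i
  have h1 := hx i (Set.mem_univ i)
  have h2 := hy i (Set.mem_univ i)
  have e1 := Int.floor_eq_iff.mpr h1
  have e2 := Int.floor_eq_iff.mpr h2
  exact e1.symm.trans e2

theorem cube_union {d : ℕ} : (⋃ α, cube (d := d) α) = Set.univ := by
  ext x
  simp only [Set.mem_iUnion, Set.mem_univ, iff_true]
  exact ⟨fun i => ⌊x i⌋, fun i _ => ⟨Int.floor_le _, Int.lt_floor_add_one _⟩⟩

theorem lintegral_cubes {d : ℕ} (f : (Fin d → ℝ) → ℝ≥0∞) :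
    ∑' α, ∫⁻ x in cube α, f x = ∫⁻ x, f x := by
  rw [← lintegral_iUnion cube_meas cube_disj, cube_union, Measure.restrict_univ]

theorem amalgam_one {d : ℕ} (ϑ : (Fin d → ℝ) → ℝ) (f : (Fin d → ℝ) → ℂ) :
    amalgamNorm 1 1 ϑ f = eLpNorm (fun x => ϑ x • f x) 1 volume := by
  simp only [amalgamNorm, ENNReal.ofReal_one, ENNReal.rpow_one, div_one,
    eLpNorm_one_eq_lintegral_enorm]
  exact lintegral_cubes _

theorem amalgam_gauss {d : ℕ} {q r D c : ℝ} (hr : 1 ≤ r) (hD : 0 ≤ D) (hc : 0 < c)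
    {ϑ : (Fin d → ℝ) → ℝ} (h : IsBeurling ϑ) (F : (Fin d → ℝ) → ℂ)
    (hF : ∀ x, ‖F x‖ ≤ D * Real.exp (-c * ∑ i, x i ^ 2)) :
    amalgamNorm q r ϑ F < ⊤ := by
  obtain ⟨C, a, hC, ha, hb⟩ := beurling_bound h
  set E : ℝ := C * D * Real.exp (a ^ 2 / (2 * c)) with hE
  have hE0 : 0 ≤ E := by positivity
  clear_value E
  have key : ∀ x, ‖ϑ x • F x‖ ≤ E * Real.exp (-(c / 2) * ∑ i, x i ^ 2) := by
    intro x
    have h1 := h.2.1 x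
    rw [norm_smul, Real.norm_of_nonneg (by linarith)]
    calc ϑ x * ‖F x‖ ≤ (C * Real.exp (a * ‖x‖)) * (D * Real.exp (-c * ∑ i, x i ^ 2)) := by
          gcongr
          · exact hb x
          · exact hF x
      _ = C * D * (Real.exp (a * ‖x‖) * Real.exp (-c * ∑ i, x i ^ 2)) := by ring
      _ ≤ C * D * (Real.exp (a ^ 2 / (2 * c)) * Real.exp (-(c / 2) * ∑ i, x i ^ 2)) := by
          gcongr ?_ * ?_
          exact exp_absorb hc x
      _ = _ := by rw [hE]; ring
  have key2 : ∀ α : Fin d → ℤ, ∀ x ∈ cube α, ∀ y ∈ cube α, ‖ϑ x • F x‖ ≤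
      E * Real.exp (c / 2 * d) * Real.exp (-(c / 4) * ∑ i, y i ^ 2) := by
    intro α x hx y hy
    refine (key x).trans ?_
    rw [mul_assoc, ← Real.exp_add]
    refine mul_le_mul_of_nonneg_left (Real.exp_le_exp.mpr ?_) hE0
    have : ∑ i, y i ^ 2 ≤ ∑ i, (2 * x i ^ 2 + 2) := by
      apply Finset.sum_le_sum
      intro i _
      have h1 := hx i (Set.mem_univ i)
      have h2 := hy i (Set.mem_univ i)
      have h3 : (y i - x i) ^ 2 ≤ 1 := by
        rw [sq_le_one_iff_abs_le_one, abs_le]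
        constructor <;> linarith [h1.1, h1.2, h2.1, h2.2]
      nlinarith [sq_nonneg (y i - 2 * x i)]
    rw [Finset.sum_add_distrib, ← Finset.mul_sum] at this
    simp only [Finset.sum_const, Finset.card_univ, Fintype.card_fin, nsmul_eq_mul] at this
    nlinarith
  set E' := E * Real.exp (c / 2 * d)
  have hE'0 : 0 ≤ E' := by positivity
  have hr0 : 0 < r := by linarith
  have cub : ∀ α : Fin d → ℤ,
      (eLpNorm (fun x => ϑ x • F x) (ENNReal.ofReal q) (volume.restrict (cube α))) ^ r ≤
      ∫⁻ y in cube α, ENNReal.ofReal (E' ^ r * Real.exp (-(c / 4 * r) * ∑ i, y i ^ 2)) := by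
    intro α
    have : ∀ y ∈ cube α,
        (eLpNorm (fun x => ϑ x • F x) (ENNReal.ofReal q) (volume.restrict (cube α))) ^ r ≤
        ENNReal.ofReal (E' ^ r * Real.exp (-(c / 4 * r) * ∑ i, y i ^ 2)) := by
      intro y hy
      have h1 := eLpNorm_le_of_ae_bound (p := ENNReal.ofReal q) (μ := volume.restrict (cube α))
        (f := fun x => ϑ x • F x) (C := E' * Real.exp (-(c / 4) * ∑ i, y i ^ 2))
        (by
          filter_upwards [ae_restrict_mem (cube_meas α)] with x hx
          exact key2 α x hx y hy)
      rw [Measure.restrict_apply_univ, cube_vol, ENNReal.one_rpow, one_mul] at h1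
      refine (ENNReal.rpow_le_rpow h1 hr0.le).trans ?_
      rw [ENNReal.ofReal_rpow_of_nonneg (by positivity) hr0.le,
        Real.mul_rpow hE'0 (Real.exp_nonneg _), ← Real.exp_mul]
      apply le_of_eq
      congr 3
      ring
    calc _ = ∫⁻ y in cube α, (eLpNorm (fun x => ϑ x • F x) (ENNReal.ofReal q)
              (volume.restrict (cube α))) ^ r := by
          rw [lintegral_const, Measure.restrict_apply_univ, cube_vol, mul_one]
      _ ≤ _ := setLIntegral_mono' (cube_meas α) this
  unfold amalgamNorm
  apply ENNReal.rpow_lt_top_of_nonneg (by positivity)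
  apply ne_of_lt
  refine (ENNReal.tsum_le_tsum cub).trans_lt ?_
  rw [lintegral_cubes]
  have hi : Integrable (fun y : Fin d → ℝ => E' ^ r * Real.exp (-(c / 4 * r) * ∑ i, y i ^ 2)) :=
    (gauss_int (by positivity)).const_mul _
  exact hi.lintegral_lt_top

/-- The Gaussian. -/
noncomputable def G {d : ℕ} (t : Fin d → ℝ) : ℝ := Real.exp (-1 * ∑ i, t i ^ 2)

theorem G_int {d : ℕ} : Integrable (G (d := d)) := gauss_int one_pos

theorem G_cont {d : ℕ} : Continuous (G (d := d)) := by
  unfold G; fun_prop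

theorem G_pos {d : ℕ} (t : Fin d → ℝ) : 0 < G t := Real.exp_pos _

theorem Z_pos {d : ℕ} : 0 < ∫ t : Fin d → ℝ, G t :=
  integral_pos_of_integrable_nonneg_nonzero (x := 0) G_cont G_int (fun t => (G_pos t).le) (G_pos _).ne'

/-- The Gaussian average of `h` at scale `s`. -/
noncomputable def avg {d : ℕ} (s : ℝ) (h : (Fin d → ℝ) → ℂ) (x : Fin d → ℝ) : ℂ :=
  ((∫ t : Fin d → ℝ, G t : ℝ) : ℂ)⁻¹ * ∫ t : Fin d → ℝ, (G t : ℂ) * h (x - s • t)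

/-- The character. -/
noncomputable def ch {d : ℕ} (x ξ : Fin d → ℝ) : ℂ :=
  Complex.exp (-(2 * (Real.pi : ℂ) * Complex.I * ∑ i, (x i : ℂ) * (ξ i : ℂ)))

theorem ch_norm {d : ℕ} (x ξ : Fin d → ℝ) : ‖ch x ξ‖ = 1 := by
  have : -(2 * (Real.pi : ℂ) * Complex.I * ∑ i, (x i : ℂ) * (ξ i : ℂ)) =
      ((-(2 * Real.pi * ∑ i, x i * ξ i) : ℝ) : ℂ) * Complex.I := by
    push_cast; ring
  rw [ch, this, Complex.norm_exp_ofReal_mul_I]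

theorem ch_add {d : ℕ} (x y ξ : Fin d → ℝ) : ch (x + y) ξ = ch x ξ * ch y ξ := by
  rw [ch, ch, ch, ← Complex.exp_add]
  congr 1
  simp only [Pi.add_apply, Complex.ofReal_add, add_mul, Finset.sum_add_distrib]
  ring

theorem ch_cont {d : ℕ} : Continuous (fun p : (Fin d → ℝ) × (Fin d → ℝ) => ch p.1 p.2) := by
  unfold ch; fun_prop

theorem fourierT_meas {d : ℕ} {f : (Fin d → ℝ) → ℂ} (hf : Measurable f) :
    Measurable (fourierT f) := by
  have : StronglyMeasurable (fun p : (Fin d → ℝ) × (Fin d → ℝ) => ch p.2 p.1 * f p.2) := by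
    apply Measurable.stronglyMeasurable
    exact (ch_cont.comp continuous_swap).measurable.mul (hf.comp measurable_snd)
  exact this.integral_prod_right'.measurable

theorem avg_meas {d : ℕ} {s : ℝ} {h : (Fin d → ℝ) → ℂ} (hf : Measurable h) :
    Measurable (avg s h) := by
  have : StronglyMeasurable (fun p : (Fin d → ℝ) × (Fin d → ℝ) =>
      (G p.2 : ℂ) * h (p.1 - s • p.2)) := by
    apply Measurable.stronglyMeasurable
    have := (G_cont (d := d)).measurable
    fun_prop
  exact (this.integral_prod_right'.measurable).const_mul _

theorem fourierT_bound {d : ℕ} {f : (Fin d → ℝ) → ℂ} (ξ : Fin d → ℝ) :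
    ‖fourierT f ξ‖ ≤ ∫ x, ‖f x‖ := by
  refine (norm_integral_le_integral_norm _).trans (le_of_eq ?_)
  congr 1
  ext x
  rw [norm_mul]
  have := ch_norm x ξ
  rw [ch] at this
  rw [this, one_mul]

theorem fourierT_avg {d : ℕ} {s : ℝ} {h : (Fin d → ℝ) → ℂ} (hm : Measurable h)
    (hi : Integrable h) (ξ : Fin d → ℝ) :
    fourierT (avg s h) ξ = ((∫ t : Fin d → ℝ, G t : ℝ) : ℂ)⁻¹ *
      ((∫ t, (G t : ℂ) * ch (s • t) ξ) * fourierT h ξ) := by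
  have hGm := (G_cont (d := d)).measurable
  have hcm : Measurable (fun x : Fin d → ℝ => ch x ξ) :=
    (ch_cont.comp (by fun_prop : Continuous fun x : Fin d → ℝ => (x, ξ))).measurable
  have hI : Integrable (Function.uncurry fun x t : Fin d → ℝ =>
      ch x ξ * ((G t : ℂ) * h (x - s • t))) (volume.prod volume) := by
    rw [integrable_prod_iff']
    · constructor
      · refine Eventually.of_forall fun t => ?_
        have h1 : Integrable (fun x => (G t : ℂ) * h (x - s • t)) :=
          (hi.comp_sub_right (s • t)).const_mul _
        refine h1.bdd_mul (c := 1) hcm.aestronglyMeasurable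
          (Eventually.of_forall fun x => (ch_norm x ξ).le)
      · have : (fun t : Fin d → ℝ => ∫ x : Fin d → ℝ,
            ‖Function.uncurry (fun x t : Fin d → ℝ =>
              ch x ξ * ((G t : ℂ) * h (x - s • t))) (x, t)‖) =
            fun t => G t * ∫ x, ‖h x‖ := by
          ext t
          simp only [Function.uncurry, norm_mul, ch_norm, one_mul, Complex.norm_real,
            Real.norm_of_nonneg (G_pos t).le]
          rw [integral_const_mul, integral_sub_right_eq_self (fun x => ‖h x‖)]
        rw [this]
        exact G_int.mul_const _
    · apply Measurable.aestronglyMeasurable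
      unfold Function.uncurry
      fun_prop
  have e1 : fourierT (avg s h) ξ = ((∫ t : Fin d → ℝ, G t : ℝ) : ℂ)⁻¹ *
      ∫ x : Fin d → ℝ, ∫ t : Fin d → ℝ, ch x ξ * ((G t : ℂ) * h (x - s • t)) := by
    rw [← integral_const_mul]
    unfold fourierT
    congr 1
    ext x
    rw [integral_const_mul, avg, ch]
    ring
  rw [e1, integral_integral_swap hI, ← integral_mul_const]
  congr 2
  ext t
  have : ∀ x, ch x ξ * ((G t : ℂ) * h (x - s • t)) =
      (fun y => ((G t : ℂ) * ch (s • t) ξ) * (ch y ξ * h y)) (x - s • t) := by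
    intro x
    have : ch x ξ = ch (x - s • t) ξ * ch (s • t) ξ := by rw [← ch_add, sub_add_cancel]
    simp only [this]
    ring
  simp_rw [this]
  rw [integral_sub_right_eq_self (fun y => ((G t : ℂ) * ch (s • t) ξ) * (ch y ξ * h y)),
    integral_const_mul]
  rfl

theorem gauss_hat {d : ℕ} (s : ℝ) : ∃ K : ℝ, 0 ≤ K ∧ ∀ ξ : Fin d → ℝ,
    ‖∫ t : Fin d → ℝ, (G t : ℂ) * ch (s • t) ξ‖ ≤
      K * Real.exp (-((Real.pi * s) ^ 2) * ∑ i, ξ i ^ 2) := by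
  refine ⟨‖((Real.pi : ℂ) / 1) ^ (Fintype.card (Fin d) / 2 : ℂ)‖, norm_nonneg _, fun ξ => ?_⟩
  have h := GaussianFourier.integral_cexp_neg_mul_sum_add (b := 1) (ι := Fin d) (by simp)
    (fun i => -(2 * Real.pi * Complex.I * s * ξ i))
  have e : (fun t : Fin d → ℝ => (G t : ℂ) * ch (s • t) ξ) = fun v : Fin d → ℝ =>
      Complex.exp (-1 * ∑ i, (v i : ℂ) ^ 2 + ∑ i, -(2 * Real.pi * Complex.I * s * ξ i) * v i) := by
    ext t
    rw [G, ch, Complex.ofReal_exp, ← Complex.exp_add]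
    congr 1
    push_cast
    congr 1
    rw [Finset.mul_sum, ← Finset.sum_neg_distrib]
    refine Finset.sum_congr rfl fun i _ => ?_
    simp
    ring
  rw [e, h, norm_mul]
  refine mul_le_mul_of_nonneg_left (le_of_eq ?_) (norm_nonneg _)
  have e2 : (∑ i, (-(2 * Real.pi * Complex.I * s * ξ i)) ^ 2) / (4 * 1) =
      ((-((Real.pi * s) ^ 2) * ∑ i, ξ i ^ 2 : ℝ) : ℂ) := by
    push_cast
    rw [Finset.mul_sum, Finset.sum_div]
    refine Finset.sum_congr rfl fun i _ => ?_
    have := Complex.I_sq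
    ring_nf
    rw [this]
    ring
  rw [e2, ← Complex.ofReal_exp, Complex.norm_real, Real.norm_of_nonneg (Real.exp_nonneg _)]

theorem avg_amalgam {d : ℕ} {q r s : ℝ} (hr : 1 ≤ r) (hs : 0 < s)
    {ϑ : (Fin d → ℝ) → ℝ} (hϑ : IsBeurling ϑ) {h : (Fin d → ℝ) → ℂ} (hm : Measurable h)
    (hi : Integrable h) : MemAmalgam q r ϑ (fourierT (avg s h)) := by
  refine ⟨fourierT_meas (avg_meas hm), ?_⟩
  obtain ⟨K, hK, hb⟩ := gauss_hat (d := d) s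
  have hZ := Z_pos (d := d)
  have hh : 0 ≤ ∫ x, ‖h x‖ := integral_nonneg fun x => norm_nonneg _
  refine amalgam_gauss (D := (∫ t : Fin d → ℝ, G t)⁻¹ * (K * ∫ x, ‖h x‖)) (c := (Real.pi * s) ^ 2)
    hr (by positivity) (by have := Real.pi_pos; positivity) hϑ _ fun ξ => ?_
  rw [fourierT_avg hm hi, norm_mul, norm_mul, norm_inv, Complex.norm_real,
    Real.norm_of_nonneg hZ.le]
  calc _ ≤ (∫ t : Fin d → ℝ, G t)⁻¹ * ((K * Real.exp (-((Real.pi * s) ^ 2) * ∑ i, ξ i ^ 2)) *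
        ∫ x, ‖h x‖) := by
        gcongr
        · exact hb ξ
        · exact fourierT_bound ξ
    _ = _ := by ring

/-- The modulus of continuity of `h` in the weighted space. -/
noncomputable def om {d : ℕ} (ϑ : (Fin d → ℝ) → ℝ) (h : (Fin d → ℝ) → ℂ) (u : Fin d → ℝ) : ℝ≥0∞ :=
  ∫⁻ x, ‖ϑ x • (h x - h (x - u))‖ₑ

theorem om_tendsto {d : ℕ} {ϑ : (Fin d → ℝ) → ℝ} (hϑ : IsBeurling ϑ) {h : (Fin d → ℝ) → ℂ}
    (hc : Continuous h) (hs : HasCompactSupport h) {s : ℕ → ℝ} (hs0 : ∀ n, |s n| ≤ 1)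
    (hst : Tendsto s atTop (𝓝 0)) (t : Fin d → ℝ) :
    Tendsto (fun n => om ϑ h (s n • t)) atTop (𝓝 0) := by
  obtain ⟨C, a, hC, ha, hb⟩ := beurling_bound hϑ
  obtain ⟨M, hM⟩ := hs.exists_bound_of_continuous hc
  obtain ⟨R, hR⟩ := hs.isBounded.subset_closedBall 0
  have hM0 : 0 ≤ M := (norm_nonneg _).trans (hM 0)
  have hz : ∀ y, R < ‖y‖ → h y = 0 := by
    intro y hy
    by_contra hne
    have := hR (subset_tsupport h hne)
    rw [mem_closedBall_zero_iff] at this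
    linarith
  have hm := hϑ.1
  have hcm := hc.measurable
  have := tendsto_lintegral_of_dominated_convergence (μ := (volume : Measure (Fin d → ℝ)))
    (F := fun n x => ‖ϑ x • (h x - h (x - s n • t))‖ₑ) (f := fun _ => 0)
    (bound := (Metric.closedBall (0 : Fin d → ℝ) (R + ‖t‖)).indicator
      fun _ => ENNReal.ofReal (C * Real.exp (a * (R + ‖t‖)) * (M + M))) ?_ ?_ ?_ ?_
  · simpa [om] using this
  · intro n
    fun_prop
  · intro n
    refine Eventually.of_forall fun x => ?_
    have hst' : ‖s n • t‖ ≤ ‖t‖ := by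
      rw [norm_smul, Real.norm_eq_abs]
      exact mul_le_of_le_one_left (norm_nonneg _) (hs0 n)
    by_cases hx : ‖x‖ ≤ R + ‖t‖
    · rw [Set.indicator_of_mem (by simpa using hx)]
      simp only
      rw [← ofReal_norm, norm_smul, Real.norm_of_nonneg (by linarith [hϑ.2.1 x])]
      apply ENNReal.ofReal_le_ofReal
      have h1 : ϑ x ≤ C * Real.exp (a * (R + ‖t‖)) := (hb x).trans (by gcongr)
      have h2 : ‖h x - h (x - s n • t)‖ ≤ M + M :=
        (norm_sub_le _ _).trans (add_le_add (hM _) (hM _))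
      exact mul_le_mul h1 h2 (norm_nonneg _) (by positivity)
    · push Not at hx
      have e1 : h x = 0 := hz x (by linarith [norm_nonneg t])
      have e2 : h (x - s n • t) = 0 := hz _ (by
        have := norm_sub_norm_le x (s n • t)
        linarith)
      simp [e1, e2]
  · rw [lintegral_indicator Metric.isClosed_closedBall.measurableSet, lintegral_const,
      Measure.restrict_apply_univ]
    exact ENNReal.mul_ne_top ENNReal.ofReal_ne_top
      (isCompact_closedBall (0 : Fin d → ℝ) (R + ‖t‖)).measure_lt_top.ne
  · refine Eventually.of_forall fun x => ?_
    have h1 : Tendsto (fun n => ϑ x • (h x - h (x - s n • t))) atTop (𝓝 0) := by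
      have h2 : Tendsto (fun n => x - s n • t) atTop (𝓝 x) := by
        simpa using (tendsto_const_nhds (x := x)).sub (hst.smul_const t)
      have h3 := (hc.tendsto x).comp h2
      simpa using ((tendsto_const_nhds (x := h x)).sub h3).const_smul (ϑ x)
    simpa using h1.enorm

theorem om_bound {d : ℕ} {ϑ : (Fin d → ℝ) → ℝ} (hϑ : IsBeurling ϑ) {h : (Fin d → ℝ) → ℂ}
    (hm : Measurable h) (u : Fin d → ℝ) :
    om ϑ h u ≤ (1 + ENNReal.ofReal (ϑ u)) * ∫⁻ x, ‖ϑ x • h x‖ₑ := by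
  have hϑm := hϑ.1
  calc om ϑ h u ≤ ∫⁻ x, (‖ϑ x • h x‖ₑ + ENNReal.ofReal (ϑ u) * ‖ϑ (x - u) • h (x - u)‖ₑ) := by
        apply lintegral_mono
        intro x
        simp only
        rw [smul_sub]
        refine (enorm_sub_le).trans ?_
        gcongr
        rw [enorm_smul, enorm_smul, ← mul_assoc]
        gcongr
        rw [Real.enorm_of_nonneg (by linarith [hϑ.2.1 x]),
          Real.enorm_of_nonneg (by linarith [hϑ.2.1 (x - u)]),
          ← ENNReal.ofReal_mul (by linarith [hϑ.2.1 u])]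
        apply ENNReal.ofReal_le_ofReal
        have := hϑ.2.2 u (x - u)
        simpa using this
    _ = _ := by
        rw [lintegral_add_left (by fun_prop), lintegral_const_mul _ (by fun_prop),
          lintegral_sub_right_eq_self (fun x => ‖ϑ x • h x‖ₑ), add_mul, one_mul]

theorem avg_err {d : ℕ} {ϑ : (Fin d → ℝ) → ℝ} (hϑ : IsBeurling ϑ) {h : (Fin d → ℝ) → ℂ}
    (hc : Continuous h) (hs : HasCompactSupport h) (s : ℝ) :
    eLpNorm (fun x => ϑ x • (h x - avg s h x)) 1 volume ≤
      ENNReal.ofReal (∫ t : Fin d → ℝ, G t)⁻¹ * ∫⁻ t, ENNReal.ofReal (G t) * om ϑ h (s • t) := by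
  have hZ := Z_pos (d := d)
  have hϑm := hϑ.1
  have hcm := hc.measurable
  have hGm := (G_cont (d := d)).measurable
  obtain ⟨M, hM⟩ := hs.exists_bound_of_continuous hc
  have hGc : Integrable (fun t : Fin d → ℝ => (G t : ℂ)) := G_int.ofReal
  rw [eLpNorm_one_eq_lintegral_enorm]
  have pt : ∀ x, ‖ϑ x • (h x - avg s h x)‖ₑ ≤ ENNReal.ofReal (∫ t : Fin d → ℝ, G t)⁻¹ *
      ∫⁻ t, ENNReal.ofReal (G t) * ‖ϑ x • (h x - h (x - s • t))‖ₑ := by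
    intro x
    have e : ϑ x • (h x - avg s h x) = ((∫ t : Fin d → ℝ, G t : ℝ) : ℂ)⁻¹ *
        ∫ t : Fin d → ℝ, (G t : ℂ) * (ϑ x • (h x - h (x - s • t))) := by
      have i1 : Integrable (fun t : Fin d → ℝ => (G t : ℂ) * h x) := hGc.mul_const _
      have i2 : Integrable (fun t : Fin d → ℝ => (G t : ℂ) * h (x - s • t)) :=
        hGc.mul_bdd (c := M) (by
          apply Measurable.aestronglyMeasurable
          fun_prop) (Eventually.of_forall fun t => hM _)
      have : ∀ t : Fin d → ℝ, (G t : ℂ) * (ϑ x • (h x - h (x - s • t))) =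
          (ϑ x : ℂ) * ((G t : ℂ) * h x - (G t : ℂ) * h (x - s • t)) := by
        intro t
        rw [Complex.real_smul]; ring
      simp_rw [this]
      rw [integral_const_mul, integral_sub i1 i2, integral_mul_const, integral_complex_ofReal, avg,
        Complex.real_smul]
      have hZ' : ((∫ t : Fin d → ℝ, G t : ℝ) : ℂ) ≠ 0 := by exact_mod_cast hZ.ne'
      field_simp
    rw [e, enorm_mul, ← Complex.ofReal_inv, ← ofReal_norm (((_ : ℝ)) : ℂ),
      Complex.norm_real, Real.norm_of_nonneg (by positivity)]
    gcongr
    refine (enorm_integral_le_lintegral_enorm _).trans (le_of_eq ?_)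
    congr 1
    ext t
    rw [enorm_mul, ← ofReal_norm ((G t : ℝ) : ℂ), Complex.norm_real,
      Real.norm_of_nonneg (G_pos t).le]
  refine (lintegral_mono pt).trans (le_of_eq ?_)
  have mm : Measurable (Function.uncurry fun x t : Fin d → ℝ =>
      ENNReal.ofReal (G t) * ‖ϑ x • (h x - h (x - s • t))‖ₑ) := by
    unfold Function.uncurry
    fun_prop
  have mm2 : Measurable fun x : Fin d → ℝ =>
      ∫⁻ t, ENNReal.ofReal (G t) * ‖ϑ x • (h x - h (x - s • t))‖ₑ := mm.lintegral_prod_right'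
  rw [lintegral_const_mul _ mm2, lintegral_lintegral_swap mm.aemeasurable]
  congr 2
  ext t
  rw [lintegral_const_mul _ (by fun_prop), om]

theorem avg_tendsto {d : ℕ} {ϑ : (Fin d → ℝ) → ℝ} (hϑ : IsBeurling ϑ) {h : (Fin d → ℝ) → ℂ}
    (hc : Continuous h) (hs : HasCompactSupport h)
    (hfin : ∫⁻ x, ‖ϑ x • h x‖ₑ < ⊤) {s : ℕ → ℝ} (hs0 : ∀ n, |s n| ≤ 1)
    (hst : Tendsto s atTop (𝓝 0)) :
    Tendsto (fun n => eLpNorm (fun x => ϑ x • (h x - avg (s n) h x)) 1 volume) atTop (𝓝 0) := by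
  obtain ⟨C, a, hC, ha, hb⟩ := beurling_bound hϑ
  have hϑm := hϑ.1
  have hcm := hc.measurable
  have hGm := (G_cont (d := d)).measurable
  set N := ∫⁻ x, ‖ϑ x • h x‖ₑ with hN
  have key : Tendsto (fun n => ∫⁻ t, ENNReal.ofReal (G t) * om ϑ h (s n • t)) atTop (𝓝 0) := by
    have := tendsto_lintegral_of_dominated_convergence (μ := (volume : Measure (Fin d → ℝ)))
      (F := fun n t => ENNReal.ofReal (G t) * om ϑ h (s n • t)) (f := fun _ => 0)
      (bound := fun t => ENNReal.ofReal (G t + C * (Real.exp (a * ‖t‖) * G t)) * N) ?_ ?_ ?_ ?_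
    · simpa using this
    · intro n
      refine (hGm.ennreal_ofReal).mul ?_
      have mm : Measurable (Function.uncurry fun t x : Fin d → ℝ =>
          ‖ϑ x • (h x - h (x - s n • t))‖ₑ) := by
        unfold Function.uncurry
        fun_prop
      exact mm.lintegral_prod_right'
    · intro n
      refine Eventually.of_forall fun t => ?_
      have hst' : ‖s n • t‖ ≤ ‖t‖ := by
        rw [norm_smul, Real.norm_eq_abs]
        exact mul_le_of_le_one_left (norm_nonneg _) (hs0 n)
      have h1 : ϑ (s n • t) ≤ C * Real.exp (a * ‖t‖) := (hb _).trans (by gcongr)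
      calc ENNReal.ofReal (G t) * om ϑ h (s n • t)
          ≤ ENNReal.ofReal (G t) * ((1 + ENNReal.ofReal (ϑ (s n • t))) * N) := by
            gcongr
            exact om_bound hϑ hcm _
        _ ≤ ENNReal.ofReal (G t) * ((1 + ENNReal.ofReal (C * Real.exp (a * ‖t‖))) * N) := by
            gcongr
        _ = ENNReal.ofReal (G t + C * (Real.exp (a * ‖t‖) * G t)) * N := by
            rw [← mul_assoc, ← ENNReal.ofReal_one, ← ENNReal.ofReal_add (by norm_num) (by positivity),
              ← ENNReal.ofReal_mul (G_pos t).le]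
            congr 2
            ring
    · rw [lintegral_mul_const _ (by fun_prop)]
      refine ENNReal.mul_ne_top (ne_of_lt ?_) hfin.ne
      have : Integrable (fun t : Fin d → ℝ => G t + C * (Real.exp (a * ‖t‖) * G t)) := by
        refine G_int.add (Integrable.const_mul ?_ _)
        refine ((gauss_int (d := d) (b := 1 / 2) (by norm_num)).const_mul
          (Real.exp (a ^ 2 / (2 * 1)))).mono' ?_ (Eventually.of_forall fun t => ?_)
        · apply Measurable.aestronglyMeasurable
          fun_prop
        · rw [Real.norm_of_nonneg (mul_nonneg (Real.exp_nonneg _) (G_pos t).le)]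
          exact exp_absorb one_pos t
      exact this.lintegral_lt_top
    · refine Eventually.of_forall fun t => ?_
      have := ENNReal.Tendsto.const_mul (om_tendsto hϑ hc hs hs0 hst t)
        (Or.inr (ENNReal.ofReal_ne_top (r := G t)))
      simpa using this
  have k2 := ENNReal.Tendsto.const_mul key
    (Or.inr (ENNReal.ofReal_ne_top (r := (∫ t : Fin d → ℝ, G t)⁻¹)))
  rw [mul_zero] at k2
  exact tendsto_of_tendsto_of_tendsto_of_le_of_le tendsto_const_nhds k2 (fun _ => bot_le)
    fun n => avg_err hϑ hc hs (s n)

theorem cc_dense {d : ℕ} {ϑ : (Fin d → ℝ) → ℝ} (hϑ : IsBeurling ϑ) {g : (Fin d → ℝ) → ℂ}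
    (hg : Measurable g) (hfin : ∫⁻ x, ‖ϑ x • g x‖ₑ < ⊤) {ε : ℝ≥0∞} (hε : ε ≠ 0) :
    ∃ h : (Fin d → ℝ) → ℂ, Continuous h ∧ HasCompactSupport h ∧
      ∫⁻ x, ‖ϑ x • (g x - h x)‖ₑ ≤ ε := by
  obtain ⟨C, a, hC, ha, hb⟩ := beurling_bound hϑ
  have hϑm := hϑ.1
  have hw : Measurable (fun x => ENNReal.ofReal (ϑ x)) := hϑm.ennreal_ofReal
  let μ : Measure (Fin d → ℝ) := volume.withDensity fun x => ENNReal.ofReal (ϑ x)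
  have conv : ∀ k : (Fin d → ℝ) → ℂ, Measurable k →
      ∫⁻ x, ‖k x‖ₑ ∂μ = ∫⁻ x, ‖ϑ x • k x‖ₑ := by
    intro k hk
    rw [lintegral_withDensity_eq_lintegral_mul _ hw (by fun_prop)]
    congr 1
    ext x
    rw [Pi.mul_apply, enorm_smul, Real.enorm_of_nonneg (by linarith [hϑ.2.1 x])]
  haveI : IsLocallyFiniteMeasure μ := by
    refine ⟨fun x => ⟨Metric.closedBall x 1, Metric.closedBall_mem_nhds x one_pos, ?_⟩⟩
    rw [withDensity_apply _ Metric.isClosed_closedBall.measurableSet]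
    calc _ ≤ ∫⁻ y in Metric.closedBall x 1, ENNReal.ofReal (C * Real.exp (a * (‖x‖ + 1))) := by
          refine setLIntegral_mono' Metric.isClosed_closedBall.measurableSet fun y hy => ?_
          apply ENNReal.ofReal_le_ofReal
          refine (hb y).trans ?_
          have : ‖y‖ ≤ ‖x‖ + 1 := by
            rw [mem_closedBall_iff_norm] at hy
            have := norm_sub_norm_le y x
            linarith
          gcongr
      _ < ⊤ := by
          rw [lintegral_const, Measure.restrict_apply_univ]
          exact ENNReal.mul_lt_top ENNReal.ofReal_lt_top (isCompact_closedBall x 1).measure_lt_top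
  have hgi : Integrable g μ := ⟨hg.aestronglyMeasurable, by
    rw [HasFiniteIntegral, conv g hg]; exact hfin⟩
  obtain ⟨h, h1, h2, h3, _⟩ := hgi.exists_hasCompactSupport_lintegral_sub_le hε
  refine ⟨h, h3, h1, ?_⟩
  rw [← conv (fun x => g x - h x) (hg.sub h3.measurable)]
  exact h2

end ADense


/-- if `ϑ₁` satisfies the Beurling–Domar condition, then
`A^{1,1,q,r}_{ϑ₁,ϑ₂}(ℝ^d)` is a dense subspace of the Beurling algebra `L¹_{ϑ₁}(ℝ^d)`
and `‖f‖_{1,ϑ₁} ≤ ‖f‖_A` for every `f` in it. -/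
theorem A_dense_in_beurling_algebra {d : ℕ} (q r : ℝ) (hq : 1 ≤ q) (hr : 1 ≤ r)
    (ϑ₁ ϑ₂ : (Fin d → ℝ) → ℝ) (h1 : IsBeurling ϑ₁) (h2 : IsBeurling ϑ₂)
    (hBD : BeurlingDomar ϑ₁) :
    (∀ f : (Fin d → ℝ) → ℂ, MemA 1 q r ϑ₁ ϑ₂ f →
      eLpNorm (fun x => ϑ₁ x • f x) 1 volume ≤ ANorm 1 q r ϑ₁ ϑ₂ f) ∧
    (∀ g : (Fin d → ℝ) → ℂ, Measurable g →
      eLpNorm (fun x => ϑ₁ x • g x) 1 volume < ⊤ →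
      ∀ ε : ℝ, 0 < ε → ∃ f : (Fin d → ℝ) → ℂ, MemA 1 q r ϑ₁ ϑ₂ f ∧
        eLpNorm (fun x => ϑ₁ x • (g x - f x)) 1 volume < ENNReal.ofReal ε) := by
  refine ⟨fun f _ => ?_, fun g hg hgfin ε hε => ?_⟩
  · rw [ANorm, ADense.amalgam_one]
    exact le_self_add
  · have hϑm := h1.1
    rw [eLpNorm_one_eq_lintegral_enorm] at hgfin
    have hε2 : ENNReal.ofReal (ε / 2) ≠ 0 := by
      simpa using hε
    obtain ⟨h, hc, hs, hgh⟩ := ADense.cc_dense h1 hg hgfin hε2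
    have hcm := hc.measurable
    have hhfin : ∫⁻ x, ‖ϑ₁ x • h x‖ₑ < ⊤ := by
      calc ∫⁻ x, ‖ϑ₁ x • h x‖ₑ ≤ ∫⁻ x, (‖ϑ₁ x • g x‖ₑ + ‖ϑ₁ x • (g x - h x)‖ₑ) := by
            apply lintegral_mono
            intro x
            have e : ϑ₁ x • h x = ϑ₁ x • g x - ϑ₁ x • (g x - h x) := by
              rw [← smul_sub]; congr 1; ring
            simp only
            rw [e]
            exact enorm_sub_le
        _ < ⊤ := by
            rw [lintegral_add_left (by fun_prop)]
            exact ENNReal.add_lt_top.mpr ⟨hgfin, hgh.trans_lt ENNReal.ofReal_lt_top⟩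
    have ht := ADense.avg_tendsto h1 hc hs hhfin (s := fun n : ℕ => 1 / ((n : ℝ) + 1))
      (fun n => by
        rw [abs_of_nonneg (by positivity), div_le_one (by positivity)]
        linarith [(Nat.cast_nonneg n : (0 : ℝ) ≤ n)])
      tendsto_one_div_add_atTop_nhds_zero_nat
    obtain ⟨n, hn⟩ := (ht.eventually_lt_const (pos_iff_ne_zero.mpr hε2)).exists
    set s : ℝ := 1 / ((n : ℝ) + 1)
    have hs0 : 0 < s := by positivity
    have ham : Measurable (ADense.avg s h) := ADense.avg_meas hcm
    have hlt : eLpNorm (fun x => ϑ₁ x • (g x - ADense.avg s h x)) 1 volume < ENNReal.ofReal ε := by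
      rw [eLpNorm_one_eq_lintegral_enorm] at hn ⊢
      calc ∫⁻ x, ‖ϑ₁ x • (g x - ADense.avg s h x)‖ₑ
          ≤ ∫⁻ x, (‖ϑ₁ x • (g x - h x)‖ₑ + ‖ϑ₁ x • (h x - ADense.avg s h x)‖ₑ) := by
            apply lintegral_mono
            intro x
            have e : ϑ₁ x • (g x - ADense.avg s h x) =
                ϑ₁ x • (g x - h x) + ϑ₁ x • (h x - ADense.avg s h x) := by
              rw [← smul_add]; congr 1; ring
            simp only
            rw [e]
            exact enorm_add_le _ _
        _ = (∫⁻ x, ‖ϑ₁ x • (g x - h x)‖ₑ) + ∫⁻ x, ‖ϑ₁ x • (h x - ADense.avg s h x)‖ₑ :=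
            lintegral_add_left (by fun_prop) _
        _ < ENNReal.ofReal (ε / 2) + ENNReal.ofReal (ε / 2) :=
            ENNReal.add_lt_add_of_le_of_lt (hgh.trans_lt ENNReal.ofReal_lt_top).ne hgh hn
        _ = ENNReal.ofReal ε := by
            rw [← ENNReal.ofReal_add (by positivity) (by positivity)]
            congr 1; ring
    refine ⟨ADense.avg s h, ⟨⟨ham, ?_⟩, ?_⟩, hlt⟩
    · rw [ADense.amalgam_one, eLpNorm_one_eq_lintegral_enorm]
      rw [eLpNorm_one_eq_lintegral_enorm] at hlt
      calc ∫⁻ x, ‖ϑ₁ x • ADense.avg s h x‖ₑ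
          ≤ ∫⁻ x, (‖ϑ₁ x • g x‖ₑ + ‖ϑ₁ x • (g x - ADense.avg s h x)‖ₑ) := by
            apply lintegral_mono
            intro x
            have e : ϑ₁ x • ADense.avg s h x =
                ϑ₁ x • g x - ϑ₁ x • (g x - ADense.avg s h x) := by
              rw [← smul_sub]; congr 1; ring
            simp only
            rw [e]
            exact enorm_sub_le
        _ < ⊤ := by
            rw [lintegral_add_left (by fun_prop)]
            exact ENNReal.add_lt_top.mpr ⟨hgfin, hlt.trans ENNReal.ofReal_lt_top⟩
    · exact ADense.avg_amalgam hr hs0 h2 hcm (hc.integrable_of_hasCompactSupport hs)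
end
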